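/- Let p be a prime, p ≥ 3, let Γ = {m^p mod p² : m = 1, …, p−1} ⊆ ℤ/p²ℤ, and for each integer i let ξ_i = 1 + pi ∈ ℤ/p²ℤ. Let λ = (1+sp)·g with s ∈ {1,…,p} and g ∈ Γ. Then for all i, j ∈ {1,…,p}: the number of pairs (x,y) with x ∈ ξ_iΓ, y ∈ pΓ and x − y = λ in ℤ/p²ℤ is at most 1, and the number of pairs (x,y) with x ∈ pΓ, y ∈ ξ_jΓ and x − y = λ in ℤ/p²ℤ is at most 1. -/

import Mathlib

/-!
Multiplication by `p` kills `pΓ` and sends `ξ_i γ` to `p γ`, because `p² = 0`. Hence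
`x - y = λ` determines `p γ`, that is, the residue of `γ` modulo `p`. By Fermat's little theorem
`m ^ p ≡ m (mod p)`, so an element of `Γ` is determined by its residue modulo `p`
(`heilbronnGamma_eq_of_mul_eq`). Thus the component in `ξ_i Γ` is unique
(`coset_eq_of_mul_eq`), and the equation then gives the other component.
-/

/-- The multiplicative subgroup `Γ = {m^p mod p² : m = 1, …, p−1}` of `ℤ/p²ℤ`. -/
def heilbronnGamma (p : ℕ) : Finset (ZMod (p ^ 2)) :=
  (Finset.Icc 1 (p - 1)).image fun m : ℕ => (m : ZMod (p ^ 2)) ^ p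

/-- An element of `Γ` is determined by its residue modulo `p`; equality of residues modulo `p` is
expressed as equality after multiplication by `p` in `ℤ/p²ℤ`. -/
lemma heilbronnGamma_eq_of_mul_eq {p : ℕ} (hp : p.Prime) {a b : ZMod (p ^ 2)}
    (ha : a ∈ heilbronnGamma p) (hb : b ∈ heilbronnGamma p)
    (h : (p : ZMod (p ^ 2)) * a = p * b) : a = b := by
  obtain ⟨m, hm, rfl⟩ := Finset.mem_image.1 ha
  obtain ⟨n, hn, rfl⟩ := Finset.mem_image.1 hb
  rw [Finset.mem_Icc] at hm hn
  have : Fact p.Prime := ⟨hp⟩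
  have h1 : p * m ^ p ≡ p * n ^ p [MOD p * p] := by
    rw [← sq, ← ZMod.natCast_eq_natCast_iff]
    push_cast
    exact h
  have h2 : (m : ZMod p) = n := by
    have h3 := (ZMod.natCast_eq_natCast_iff _ _ _).2 (Nat.ModEq.mul_left_cancel' hp.ne_zero h1)
    push_cast at h3
    rwa [ZMod.pow_card, ZMod.pow_card] at h3
  have h4 : m = n :=
    ((ZMod.natCast_eq_natCast_iff _ _ _).1 h2).eq_of_lt_of_lt (by omega) (by omega)
  rw [h4]

lemma natCast_mul_self_eq_zero (p : ℕ) : (p : ZMod (p ^ 2)) * p = 0 := by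
  rw [← sq]
  exact_mod_cast ZMod.natCast_self (p ^ 2)

/-- An element of `ξ_i Γ` is determined by its residue modulo `p`. -/
lemma coset_eq_of_mul_eq {p : ℕ} (hp : p.Prime) (i : ℕ) {x x' : ZMod (p ^ 2)}
    (hx : x ∈ (heilbronnGamma p).image fun γ => (1 + (p : ZMod (p ^ 2)) * i) * γ)
    (hx' : x' ∈ (heilbronnGamma p).image fun γ => (1 + (p : ZMod (p ^ 2)) * i) * γ)
    (h : (p : ZMod (p ^ 2)) * x = p * x') : x = x' := by
  obtain ⟨a, ha, rfl⟩ := Finset.mem_image.1 hx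
  obtain ⟨b, hb, rfl⟩ := Finset.mem_image.1 hx'
  have hab : a = b := heilbronnGamma_eq_of_mul_eq hp ha hb <| by
    linear_combination h - (i : ZMod (p ^ 2)) * (a - b) * natCast_mul_self_eq_zero p
  rw [hab]

lemma natCast_mul_eq_zero_of_mem {p : ℕ} {y : ZMod (p ^ 2)}
    (hy : y ∈ (heilbronnGamma p).image fun γ => (p : ZMod (p ^ 2)) * γ) :
    (p : ZMod (p ^ 2)) * y = 0 := by
  obtain ⟨a, -, rfl⟩ := Finset.mem_image.1 hy
  linear_combination a * natCast_mul_self_eq_zero p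


/-- Let `p ≥ 3` be prime, `ξ_i = 1 + pi` in `ℤ/p²ℤ`, and `λ = (1+sp)·g` with `s ∈ [p]`,
`g ∈ Γ`. Then for all `i, j ∈ [p]`: the number of pairs `(x,y) ∈ ξ_iΓ × pΓ` with
`x − y = λ` is at most 1, and the number of pairs `(x,y) ∈ pΓ × ξ_jΓ` with `x − y = λ`
is at most 1. -/
theorem coset_difference_count_pGamma
    (p : ℕ) (hp : p.Prime) (hp3 : 3 ≤ p)
    (s : ℕ) (hs : s ∈ Finset.Icc 1 p) (g : ZMod (p ^ 2)) (hg : g ∈ heilbronnGamma p)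
    (i j : ℕ) (hi : i ∈ Finset.Icc 1 p) (hj : j ∈ Finset.Icc 1 p) :
    ((((heilbronnGamma p).image fun γ => (1 + (p : ZMod (p ^ 2)) * i) * γ) ×ˢ
        ((heilbronnGamma p).image fun γ => (p : ZMod (p ^ 2)) * γ)).filter
      fun xy => xy.1 - xy.2 = (1 + (s : ZMod (p ^ 2)) * p) * g).card ≤ 1 ∧
    ((((heilbronnGamma p).image fun γ => (p : ZMod (p ^ 2)) * γ) ×ˢ
        ((heilbronnGamma p).image fun γ => (1 + (p : ZMod (p ^ 2)) * j) * γ)).filter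
      fun xy => xy.1 - xy.2 = (1 + (s : ZMod (p ^ 2)) * p) * g).card ≤ 1 := by
  constructor
  · rw [Finset.card_le_one]
    rintro ⟨x, y⟩ h ⟨x', y'⟩ h'
    simp only [Finset.mem_filter, Finset.mem_product] at h h'
    obtain ⟨⟨hx, hy⟩, e⟩ := h
    obtain ⟨⟨hx', hy'⟩, e'⟩ := h'
    have hxx : x = x' := coset_eq_of_mul_eq hp i hx hx' <| by
      linear_combination (p : ZMod (p ^ 2)) * (e - e') + natCast_mul_eq_zero_of_mem hy
        - natCast_mul_eq_zero_of_mem hy'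
    have hyy : y = y' := by linear_combination hxx - e + e'
    rw [hxx, hyy]
  · rw [Finset.card_le_one]
    rintro ⟨x, y⟩ h ⟨x', y'⟩ h'
    simp only [Finset.mem_filter, Finset.mem_product] at h h'
    obtain ⟨⟨hx, hy⟩, e⟩ := h
    obtain ⟨⟨hx', hy'⟩, e'⟩ := h'
    have hyy : y = y' := coset_eq_of_mul_eq hp j hy hy' <| by
      linear_combination (p : ZMod (p ^ 2)) * (e' - e) + natCast_mul_eq_zero_of_mem hx
        - natCast_mul_eq_zero_of_mem hx'
    have hxx : x = x' := by linear_combination hyy + e - e'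
    rw [hxx, hyy]
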